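/- Let P be a dcpo and let A be a Scott closed subset of P. Then the family 𝒞 = {C ∈ P^∨ : C ⊆ A} is F-Scott closed in the poset P^∨: it is a lower set, it contains the least upper bound in P^∨ of each of its nonempty directed subfamilies, and it contains the least upper bound in P^∨ of each of its nonempty finite subfamilies that are consistent in P^∨. -/

import Mathlib

/-!
Let `𝒟` be a subfamily of `{C ∈ P^∨ : C ⊆ A}`, either nonempty directed, or nonempty, finite and
consistent. The point is that the Scott closure of `⋃ 𝒟` is itself ⋁-existing. Given a Scott
continuous `f : P → L`, each `f(C)` with `C ∈ 𝒟` has a supremum `g C`, and these suprema are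
directed in the first case, and finite in number and bounded by the supremum of `f(B)`, for an upper
bound `B` of `𝒟`, in the second; so `g(𝒟)` has a supremum in `L`, which is also the supremum of
`f(⋃ 𝒟)`. Passing to the Scott closure does not change the upper bounds of the image, because the
preimage of a principal ideal under `f` is Scott closed. Hence the closure belongs to `P^∨` and
bounds `𝒟`, so the least upper bound of `𝒟` in `P^∨` is contained in it, and therefore in the Scott
closed set `A`.
-/

universe u v

/-- A *dcpo*: a partial order in which every nonempty directed subset has a least upper bound. -/
def IsDcpo (P : Type*) [PartialOrder P] : Prop :=
  ∀ d : Set P, d.Nonempty → DirectedOn (· ≤ ·) d → ∃ a, IsLUB d a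

/-- A *dcpo-∨↑-semilattice*: a dcpo in which every consistent pair of elements
(i.e. pair with an upper bound) has a least upper bound. -/
def IsDcpoVSemilattice (L : Type*) [PartialOrder L] : Prop :=
  IsDcpo L ∧ ∀ x y : L, BddAbove ({x, y} : Set L) → ∃ a, IsLUB ({x, y} : Set L) a

/-- Scott continuity: `f` maps least upper bounds of nonempty directed sets to
least upper bounds of the images. -/
def IsScottContinuous {P : Type*} {L : Type*} [PartialOrder P] [PartialOrder L]
    (f : P → L) : Prop :=
  ∀ d : Set P, d.Nonempty → DirectedOn (· ≤ ·) d → ∀ a, IsLUB d a → IsLUB (f '' d) (f a)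

/-- A *Scott closed* set: a lower set closed under least upper bounds of its
nonempty directed subsets. -/
def IsScottClosed {P : Type*} [PartialOrder P] (A : Set P) : Prop :=
  IsLowerSet A ∧ ∀ d : Set P, d ⊆ A → d.Nonempty → DirectedOn (· ≤ ·) d →
    ∀ a, IsLUB d a → a ∈ A

/-- The Scott closure of a set: the smallest Scott closed set containing it. -/
def scottClosure {P : Type*} [PartialOrder P] (A : Set P) : Set P :=
  ⋂₀ {C | IsScottClosed C ∧ A ⊆ C}

/-- A subset `A` of a dcpo `P` is *⋁-existing* if for every Scott continuous map `f`
into an arbitrary dcpo-∨↑-semilattice `L`, the supremum of `f '' A` exists in `L`. -/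
def SupExisting {P : Type u} [PartialOrder P] (A : Set P) : Prop :=
  ∀ (L : Type v) [PartialOrder L], IsDcpoVSemilattice L →
    ∀ f : P → L, IsScottContinuous f → ∃ a, IsLUB (f '' A) a

/-- An *F-Scott closed* set: a Scott closed set containing the least upper bound of
each of its nonempty finite consistent subsets. -/
def IsFScottClosed {L : Type*} [PartialOrder L] (A : Set L) : Prop :=
  IsScottClosed A ∧ ∀ F : Set L, F ⊆ A → F.Nonempty → F.Finite → BddAbove F →
    ∀ a, IsLUB F a → a ∈ A

/-- The F-Scott closure of a set: the intersection of all F-Scott closed sets containing it. -/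
def fScottClosure {L : Type*} [PartialOrder L] (A : Set L) : Set L :=
  ⋂₀ {C | IsFScottClosed C ∧ A ⊆ C}

/-- A *dcpo-∨↑-semilattice homomorphism*: maps least upper bounds of nonempty directed
sets and of consistent pairs to the least upper bounds of the images. -/
def IsSemilatticeHom {L : Type*} {M : Type*} [PartialOrder L] [PartialOrder M]
    (f : L → M) : Prop :=
  (∀ d : Set L, d.Nonempty → DirectedOn (· ≤ ·) d → ∀ a, IsLUB d a → IsLUB (f '' d) (f a)) ∧
  (∀ x y : L, BddAbove ({x, y} : Set L) → ∀ a, IsLUB ({x, y} : Set L) a →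
    IsLUB (f '' ({x, y} : Set L)) (f a))

/-- A subset `A` of a dcpo-∨↑-semilattice `L` is *F-⋁-existing* if for every
dcpo-∨↑-semilattice homomorphism `f` into an arbitrary dcpo-∨↑-semilattice `M`,
the supremum of `f '' A` exists in `M`. -/
def FSupExisting {L : Type u} [PartialOrder L] (A : Set L) : Prop :=
  ∀ (M : Type v) [PartialOrder M], IsDcpoVSemilattice M →
    ∀ f : L → M, IsSemilatticeHom f → ∃ a, IsLUB (f '' A) a

/-- `P^∨`: the family of all ⋁-existing Scott closed subsets of `P`, ordered by inclusion. -/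
abbrev Pvee (P : Type u) [PartialOrder P] : Type u :=
  {A : Set P // IsScottClosed A ∧ SupExisting.{u, u} A}

theorem isScottClosed_principal {P : Type u} [PartialOrder P] (x : P) :
    IsScottClosed (Set.Iic x) := by
  constructor
  · intro a b hba ha
    exact le_trans hba ha
  · intro d hd _ _ a ha
    exact ha.2 fun y hy => hd hy

theorem supExisting_principal {P : Type u} [PartialOrder P] (x : P) :
    SupExisting.{u, v} (Set.Iic x) := by
  intro L _ _ f hf
  have hdir : DirectedOn (· ≤ ·) (Set.Iic x) := by
    intro a ha b hb
    exact ⟨x, le_refl x, ha, hb⟩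
  exact ⟨f x, hf (Set.Iic x) ⟨x, Set.mem_Iic.2 (le_refl x)⟩ hdir x isLUB_Iic⟩

/-- The embedding `j` of `P` into `P^∨`, sending `x` to the principal ideal `↓x`. -/
def jmap {P : Type u} [PartialOrder P] (x : P) : Pvee P :=
  ⟨Set.Iic x, isScottClosed_principal x, supExisting_principal.{u, u} x⟩

theorem IsScottContinuous.monotone_map {P : Type*} {L : Type*} [PartialOrder P] [PartialOrder L]
    {f : P → L} (hf : IsScottContinuous f) : Monotone f := by
  intro x y hxy
  have hlub : IsLUB ({x, y} : Set P) y := by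
    refine ⟨?_, fun b hb => hb (by simp)⟩
    rintro z (rfl | rfl)
    exacts [hxy, le_rfl]
  have hdir : DirectedOn (· ≤ ·) ({x, y} : Set P) :=
    fun a ha b hb => ⟨y, by simp, hlub.1 ha, hlub.1 hb⟩
  exact (hf _ ⟨x, by simp⟩ hdir y hlub).1 ⟨x, by simp, rfl⟩

theorem isScottClosed_preimage_Iic {P : Type*} {L : Type*} [PartialOrder P] [PartialOrder L]
    {f : P → L} (hf : IsScottContinuous f) (b : L) : IsScottClosed {x | f x ≤ b} := by
  refine ⟨fun x y hyx hx => (hf.monotone_map hyx).trans hx, fun d hd hne hdir a ha => ?_⟩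
  refine (hf d hne hdir a ha).2 ?_
  rintro _ ⟨x, hx, rfl⟩
  exact hd hx

theorem isScottClosed_scottClosure {P : Type*} [PartialOrder P] (A : Set P) :
    IsScottClosed (scottClosure A) := by
  refine ⟨fun x y hyx hx C hC => hC.1.1 hyx (hx C hC), fun d hd hne hdir a ha C hC => ?_⟩
  exact hC.1.2 d (fun x hx => hd hx C hC) hne hdir a ha

theorem subset_scottClosure {P : Type*} [PartialOrder P] (A : Set P) : A ⊆ scottClosure A :=
  fun _ hx _ hC => hC.2 hx

theorem isLUB_image_scottClosure {P : Type*} {L : Type*} [PartialOrder P] [PartialOrder L]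
    {f : P → L} (hf : IsScottContinuous f) {A : Set P} {a : L} (ha : IsLUB (f '' A) a) :
    IsLUB (f '' scottClosure A) a := by
  refine ⟨?_, fun b hb => ha.2 fun y hy => hb (Set.image_mono (subset_scottClosure A) hy)⟩
  rintro _ ⟨x, hx, rfl⟩
  exact hx {x | f x ≤ a} ⟨isScottClosed_preimage_Iic hf a, fun y hy => ha.1 ⟨y, hy, rfl⟩⟩

theorem exists_isLUB_of_finite {L : Type*} [PartialOrder L] (hL : IsDcpoVSemilattice L)
    {F : Set L} (hF : F.Finite) (hne : F.Nonempty) (hb : BddAbove F) : ∃ a, IsLUB F a := by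
  induction F, hF using Set.Finite.induction_on with
  | empty => exact absurd hne Set.not_nonempty_empty
  | @insert x s _ _ ih =>
    obtain rfl | hs := s.eq_empty_or_nonempty
    · exact ⟨x, by simp⟩
    · obtain ⟨b, hb⟩ := hb
      have hsb : b ∈ upperBounds s := fun y hy => hb (Set.mem_insert_of_mem _ hy)
      obtain ⟨c, hc⟩ := ih hs ⟨b, hsb⟩
      obtain ⟨a, ha⟩ := hL.2 x c ⟨b, by
        rintro y (rfl | rfl)
        exacts [hb (Set.mem_insert _ _), hc.2 hsb]⟩
      refine ⟨a, ?_, fun z hz => ha.2 ?_⟩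
      · rintro y (rfl | hy)
        · exact ha.1 (by simp)
        · exact (hc.1 hy).trans (ha.1 (by simp))
      · rintro y (rfl | rfl)
        exacts [hz (Set.mem_insert _ _), hc.2 fun w hw => hz (Set.mem_insert_of_mem _ hw)]

/-- The argument common to directed and to finite consistent families: if every monotone map from
`P^∨` to a dcpo-∨↑-semilattice sends `𝒟` to a set with a supremum, then the least upper bound of `𝒟`
in `P^∨` lies inside any Scott closed `A` that contains all members of `𝒟`. The hypothesis is used
for the map `g` taking `C` to the supremum of `f(C)`, with `f` Scott continuous. -/
theorem lub_subset_of_exists_isLUB {P : Type u} [PartialOrder P] {A : Set P}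
    (hA : IsScottClosed A) {D : Set (Pvee P)} (hDA : ∀ C ∈ D, C.1 ⊆ A)
    (h : ∀ (L : Type u) [PartialOrder L], IsDcpoVSemilattice L →
      ∀ g : Pvee P → L, Monotone g → ∃ a, IsLUB (g '' D) a)
    {S : Pvee P} (hS : IsLUB D S) : S.1 ⊆ A := by
  have hex : SupExisting.{u, u} (scottClosure (⋃ C ∈ D, C.1)) := by
    intro L _ hL f hf
    choose g hg using fun C : Pvee P => C.2.2 L hL f hf
    have hmono : Monotone g := fun C C' hCC' =>
      (hg C).2 fun y hy => (hg C').1 (Set.image_mono hCC' hy)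
    obtain ⟨a, ha⟩ := h L hL g hmono
    refine ⟨a, isLUB_image_scottClosure hf ⟨?_, fun b hb => ha.2 ?_⟩⟩
    · rintro _ ⟨x, hx, rfl⟩
      obtain ⟨C, hC, hxC⟩ := Set.mem_iUnion₂.1 hx
      exact ((hg C).1 ⟨x, hxC, rfl⟩).trans (ha.1 ⟨C, hC, rfl⟩)
    · rintro _ ⟨C, hC, rfl⟩
      refine (hg C).2 ?_
      rintro _ ⟨x, hx, rfl⟩
      exact hb ⟨x, Set.mem_iUnion₂.2 ⟨C, hC, hx⟩, rfl⟩
  have hle : S ≤ (⟨_, isScottClosed_scottClosure _, hex⟩ : Pvee P) :=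
    hS.2 fun C hC x hx => subset_scottClosure _ (Set.mem_iUnion₂.2 ⟨C, hC, hx⟩)
  exact fun x hx => hle hx A ⟨hA, Set.iUnion₂_subset hDA⟩

/-- For a Scott closed subset `A` of a dcpo `P`, the family
`{C ∈ P^∨ : C ⊆ A}` is F-Scott closed in the poset `P^∨`. -/
theorem fScottClosed_below {P : Type u} [PartialOrder P] (hP : IsDcpo P)
    (A : Set P) (hA : IsScottClosed A) :
    IsFScottClosed {C : Pvee P | C.1 ⊆ A} := by
  refine ⟨⟨fun C C' hle hC x hx => hC (hle hx), fun D hD hne hdir S hS => ?_⟩,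
    fun F hF hne hfin hb S hS => ?_⟩
  · refine lub_subset_of_exists_isLUB hA (fun C hC => hD hC) (fun L _ hL g hg => ?_) hS
    refine hL.1 _ (hne.image g) ?_
    rintro _ ⟨C, hC, rfl⟩ _ ⟨C', hC', rfl⟩
    obtain ⟨B, hB, h1, h2⟩ := hdir C hC C' hC'
    exact ⟨g B, ⟨B, hB, rfl⟩, hg h1, hg h2⟩
  · exact lub_subset_of_exists_isLUB hA (fun C hC => hF hC)
      (fun L _ hL g hg => exists_isLUB_of_finite hL (hfin.image g) (hne.image g)
        (hg.map_bddAbove hb)) hS
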